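/- Let M₁ be a real symmetric positive definite n₁ × n₁ matrix and M₂ a real symmetric positive definite n₂ × n₂ matrix, let β₁, β₂ > 0, let c ≥ 0, and let F₁₁ : ℝ → Matrix(n₁,n₁,ℝ), F₂₁ : ℝ → Matrix(n₂,n₁,ℝ), F₂₂ : ℝ → Matrix(n₂,n₂,ℝ) satisfy, for every t: M₁·F₁₁(t) + F₁₁(t)ᵀ·M₁ ⪯ -2β₁·M₁, M₂·F₂₂(t) + F₂₂(t)ᵀ·M₂ ⪯ -2β₂·M₂, and ‖F₂₁(t)·x‖ ≤ c‖x‖ for all x ∈ ℝ^{n₁}. Let x₁ : ℝ → ℝ^{n₁} and x₂ : ℝ → ℝ^{n₂} be differentiable with x₁'(t) = F₁₁(t)·x₁(t) and x₂'(t) = F₂₁(t)·x₁(t) + F₂₂(t)·x₂(t) for all t. Then there exist constants C > 0 and β > 0 such that for all t ≥ 0, ‖x₁(t)‖² + ‖x₂(t)‖² ≤ C·exp(-2βt)·(‖x₁(0)‖² + ‖x₂(0)‖²). -/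

import Mathlib

/-!
The proof is by a composite quadratic Lyapunov function. Put `V₁ = x₁ᵀ M₁ x₁` and `V₂ = x₂ᵀ M₂ x₂`.
Contraction of the first block gives `V₁' ≤ -2β₁ V₁`. In `V₂'` the cross term `2 x₂ᵀ M₂ F₂₁ x₁` is
split by Young's inequality in the metric `M₂`; half of the decay of `V₂` absorbs one part and
the rest is at most `D V₁`, so `V₂' ≤ -β₂ V₂ + D V₁`. With weight `K = D/β₁ + 1`, the function
`V = K V₁ + V₂` satisfies `V' ≤ -min(β₁, β₂) V`, hence decays exponentially. Comparing `M₁` and `M₂`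
with the identity (`exists_quadForm_le`, `exists_le_quadForm`) turns this into the Euclidean estimate.
-/

open Matrix

lemma dotProduct_self_nonneg_real {n : ℕ} (x : Fin n → ℝ) : 0 ≤ x ⬝ᵥ x :=
  Finset.sum_nonneg fun i _ => mul_self_nonneg (x i)

/-- The sum of the absolute values of the entries (plus one, for positivity) bounds the quadratic
form of any square matrix. -/
lemma exists_quadForm_le {n : ℕ} (M : Matrix (Fin n) (Fin n) ℝ) :
    ∃ B > (0 : ℝ), ∀ x : Fin n → ℝ, x ⬝ᵥ M *ᵥ x ≤ B * (x ⬝ᵥ x) := by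
  refine ⟨(∑ i, ∑ j, |M i j|) + 1,
    add_pos_of_nonneg_of_pos
      (Finset.sum_nonneg fun i _ => Finset.sum_nonneg fun j _ => abs_nonneg _) one_pos,
    fun x => ?_⟩
  have hcoord : ∀ i, x i * x i ≤ x ⬝ᵥ x := fun i =>
    Finset.single_le_sum (f := fun i => x i * x i) (fun i _ => mul_self_nonneg (x i))
      (Finset.mem_univ i)
  have hsum : x ⬝ᵥ M *ᵥ x ≤ (∑ i, ∑ j, |M i j|) * (x ⬝ᵥ x) := by
    rw [Finset.sum_mul]
    refine Finset.sum_le_sum fun i _ => ?_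
    rw [Finset.sum_mul, mulVec, dotProduct, Finset.mul_sum]
    refine Finset.sum_le_sum fun j _ => ?_
    have hij : |x i * x j| ≤ x ⬝ᵥ x := by
      rw [abs_le]
      constructor <;>
        nlinarith [hcoord i, hcoord j, sq_nonneg (x i - x j), sq_nonneg (x i + x j)]
    calc x i * (M i j * x j) = M i j * (x i * x j) := by ring
      _ ≤ |M i j * (x i * x j)| := le_abs_self _
      _ = |M i j| * |x i * x j| := abs_mul _ _
      _ ≤ |M i j| * (x ⬝ᵥ x) := mul_le_mul_of_nonneg_left hij (abs_nonneg _)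
  nlinarith [dotProduct_self_nonneg_real x]

lemma quadForm_nonneg {n : ℕ} {M : Matrix (Fin n) (Fin n) ℝ} (hM : M.PosSemidef)
    (x : Fin n → ℝ) : 0 ≤ x ⬝ᵥ M *ᵥ x := by
  simpa using hM.dotProduct_mulVec_nonneg x

lemma quadForm_comm {n : ℕ} {M : Matrix (Fin n) (Fin n) ℝ} (hM : M.IsHermitian)
    (x y : Fin n → ℝ) : x ⬝ᵥ M *ᵥ y = y ⬝ᵥ M *ᵥ x := by
  have hT : Mᵀ = M := by simpa using hM.eq
  rw [dotProduct_mulVec, ← mulVec_transpose, hT, dotProduct_comm]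

/-- Young's inequality for the bilinear form of a positive semidefinite matrix. -/
lemma quadForm_young {n : ℕ} {M : Matrix (Fin n) (Fin n) ℝ} (hM : M.PosSemidef)
    (s : ℝ) (x y : Fin n → ℝ) :
    2 * s * (x ⬝ᵥ M *ᵥ y) ≤ s ^ 2 * (x ⬝ᵥ M *ᵥ x) + y ⬝ᵥ M *ᵥ y := by
  have h := quadForm_nonneg hM (s • x - y)
  simp only [mulVec_sub, mulVec_smul, sub_dotProduct, dotProduct_sub, smul_dotProduct,
    dotProduct_smul, smul_eq_mul] at h
  rw [quadForm_comm hM.isHermitian y x] at h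
  linarith

/-- A positive definite form dominates a positive multiple of the Euclidean one. If `B` bounds the
form of `M⁻¹`, then Young's inequality for `B x` and `M⁻¹ x` gives the constant `B⁻¹`. -/
lemma exists_le_quadForm {n : ℕ} {M : Matrix (Fin n) (Fin n) ℝ} (hM : M.PosDef) :
    ∃ a > (0 : ℝ), ∀ x : Fin n → ℝ, a * (x ⬝ᵥ x) ≤ x ⬝ᵥ M *ᵥ x := by
  obtain ⟨B, hB, hBx⟩ := exists_quadForm_le M⁻¹
  refine ⟨B⁻¹, inv_pos.2 hB, fun x => ?_⟩
  have hinv : M *ᵥ (M⁻¹ *ᵥ x) = x := by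
    rw [mulVec_mulVec, mul_nonsing_inv _ ((isUnit_iff_isUnit_det M).1 hM.isUnit), one_mulVec]
  have h := quadForm_young hM.posSemidef B x (M⁻¹ *ᵥ x)
  rw [hinv, dotProduct_comm (M⁻¹ *ᵥ x) x] at h
  have h' := hBx x
  have h2 : B * (x ⬝ᵥ x) ≤ B * (B * (x ⬝ᵥ M *ᵥ x)) := by nlinarith
  rw [inv_mul_le_iff₀ hB]
  exact le_of_mul_le_mul_left h2 hB

lemma hasDerivAt_quadForm {n : ℕ} {M : Matrix (Fin n) (Fin n) ℝ} (hM : M.IsHermitian)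
    {x : ℝ → Fin n → ℝ} {v : Fin n → ℝ} {t : ℝ} (hx : HasDerivAt x v t) :
    HasDerivAt (fun s => x s ⬝ᵥ M *ᵥ x s) (2 * (x t ⬝ᵥ M *ᵥ v)) t := by
  have hi := hasDerivAt_pi.1 hx
  have h : HasDerivAt (fun s => ∑ i, x s i * ∑ j, M i j * x s j)
      (∑ i, (v i * ∑ j, M i j * x t j + x t i * ∑ j, M i j * v j)) t :=
    HasDerivAt.fun_sum fun i _ => (hi i).mul
      (HasDerivAt.fun_sum fun j _ => (hi j).const_mul (M i j))
  have he : ∑ i, (v i * ∑ j, M i j * x t j + x t i * ∑ j, M i j * v j)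
      = 2 * (x t ⬝ᵥ M *ᵥ v) := by
    rw [Finset.sum_add_distrib, two_mul]
    exact congrArg (· + x t ⬝ᵥ M *ᵥ v) (quadForm_comm hM v (x t))
  rw [he] at h
  exact h

/-- The contraction condition `M F + Fᵀ M ⪯ -2β M`, evaluated along a vector. -/
lemma contraction_quadForm {n : ℕ} {M F : Matrix (Fin n) (Fin n) ℝ} {β : ℝ}
    (hM : M.IsHermitian) (h : ((-(2 * β)) • M - (M * F + Fᵀ * M)).PosSemidef)
    (x : Fin n → ℝ) : 2 * (x ⬝ᵥ M *ᵥ (F *ᵥ x)) ≤ -(2 * β) * (x ⬝ᵥ M *ᵥ x) := by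
  have h0 := quadForm_nonneg h x
  have hT : x ⬝ᵥ (Fᵀ * M) *ᵥ x = x ⬝ᵥ M *ᵥ (F *ᵥ x) := by
    rw [← mulVec_mulVec, dotProduct_mulVec, vecMul_transpose]
    exact quadForm_comm hM _ _
  rw [sub_mulVec, add_mulVec, dotProduct_sub, dotProduct_add, hT, smul_mulVec, dotProduct_smul,
    smul_eq_mul, ← mulVec_mulVec] at h0
  linarith

/-- Differential form of Grönwall's inequality with a negative rate: `exp (r t) V t` is
antitone. -/
lemma exp_decay_of_deriv_le {V V' : ℝ → ℝ} {r : ℝ} (hV : ∀ t, HasDerivAt V (V' t) t)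
    (hle : ∀ t, V' t ≤ -r * V t) {t : ℝ} (ht : 0 ≤ t) : V t ≤ Real.exp (-r * t) * V 0 := by
  have hd : ∀ s, HasDerivAt (fun s => Real.exp (r * s) * V s)
      (Real.exp (r * s) * (r * 1) * V s + Real.exp (r * s) * V' s) s := fun s =>
    (((hasDerivAt_id s).const_mul r).exp).mul (hV s)
  have hanti : Antitone fun s => Real.exp (r * s) * V s :=
    antitone_of_hasDerivAt_nonpos hd fun s => by
      show Real.exp (r * s) * (r * 1) * V s + Real.exp (r * s) * V' s ≤ 0
      nlinarith [mul_le_mul_of_nonneg_left (hle s) (Real.exp_pos (r * s)).le]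
  have h := hanti ht
  simp only [mul_zero, Real.exp_zero, one_mul] at h
  calc V t = Real.exp (-r * t) * (Real.exp (r * t) * V t) := by
        rw [← mul_assoc, ← Real.exp_add, neg_mul, neg_add_cancel, Real.exp_zero, one_mul]
    _ ≤ Real.exp (-r * t) * V 0 := mul_le_mul_of_nonneg_left h (Real.exp_pos _).le

/-- exponential decay of the cascade virtual dynamics: a block
lower-triangular linear time-varying system whose diagonal blocks are
contracting in constant metrics `M₁`, `M₂` with rates `β₁`, `β₂`, and whose
coupling block `F₂₁(t)` is bounded in Euclidean operator norm by `c`,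
converges exponentially: `‖x₁(t)‖² + ‖x₂(t)‖² ≤ C e^{-2βt}(‖x₁(0)‖² + ‖x₂(0)‖²)`. -/
theorem cascade_exponential_decay
    (n₁ n₂ : ℕ)
    (M₁ : Matrix (Fin n₁) (Fin n₁) ℝ) (M₂ : Matrix (Fin n₂) (Fin n₂) ℝ)
    (hM₁ : M₁.PosDef) (hM₂ : M₂.PosDef)
    (β₁ β₂ : ℝ) (hβ₁ : 0 < β₁) (hβ₂ : 0 < β₂)
    (c : ℝ) (hc : 0 ≤ c)
    (F₁₁ : ℝ → Matrix (Fin n₁) (Fin n₁) ℝ)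
    (F₂₁ : ℝ → Matrix (Fin n₂) (Fin n₁) ℝ)
    (F₂₂ : ℝ → Matrix (Fin n₂) (Fin n₂) ℝ)
    (h₁ : ∀ t, ((-(2 * β₁)) • M₁ - (M₁ * F₁₁ t + (F₁₁ t)ᵀ * M₁)).PosSemidef)
    (h₂ : ∀ t, ((-(2 * β₂)) • M₂ - (M₂ * F₂₂ t + (F₂₂ t)ᵀ * M₂)).PosSemidef)
    (h₂₁ : ∀ t, ∀ x : Fin n₁ → ℝ,
      Real.sqrt ((F₂₁ t).mulVec x ⬝ᵥ (F₂₁ t).mulVec x) ≤ c * Real.sqrt (x ⬝ᵥ x))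
    (x₁ : ℝ → Fin n₁ → ℝ) (x₂ : ℝ → Fin n₂ → ℝ)
    (hx₁ : ∀ t, HasDerivAt x₁ ((F₁₁ t).mulVec (x₁ t)) t)
    (hx₂ : ∀ t, HasDerivAt x₂
      ((F₂₁ t).mulVec (x₁ t) + (F₂₂ t).mulVec (x₂ t)) t) :
    ∃ C > (0 : ℝ), ∃ β > (0 : ℝ), ∀ t ≥ (0 : ℝ),
      (x₁ t ⬝ᵥ x₁ t) + (x₂ t ⬝ᵥ x₂ t)
        ≤ C * Real.exp (-(2 * β) * t) * ((x₁ 0 ⬝ᵥ x₁ 0) + (x₂ 0 ⬝ᵥ x₂ 0)) := by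
  obtain ⟨a₁, ha₁, hlow₁⟩ := exists_le_quadForm hM₁
  obtain ⟨a₂, ha₂, hlow₂⟩ := exists_le_quadForm hM₂
  obtain ⟨B₁, hB₁, hup₁⟩ := exists_quadForm_le M₁
  obtain ⟨B₂, hB₂, hup₂⟩ := exists_quadForm_le M₂
  set V₁ : ℝ → ℝ := fun t => x₁ t ⬝ᵥ M₁ *ᵥ x₁ t with hV₁
  set V₂ : ℝ → ℝ := fun t => x₂ t ⬝ᵥ M₂ *ᵥ x₂ t with hV₂
  have hV₁0 : ∀ t, 0 ≤ V₁ t := fun t => quadForm_nonneg hM₁.posSemidef _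
  have hV₂0 : ∀ t, 0 ≤ V₂ t := fun t => quadForm_nonneg hM₂.posSemidef _
  -- `D` collects the constants of the chain `yᵀ M₂ y ≤ B₂ ‖y‖² ≤ B₂ c² ‖x₁‖² ≤ (B₂ c² / a₁) V₁`
  -- for `y = F₂₁ x₁`, and the factor `1 / β₂` from Young's inequality.
  set D : ℝ := B₂ * c ^ 2 / (a₁ * β₂) with hD
  have hD0 : 0 ≤ D := by positivity
  have hDmul : D * (a₁ * β₂) = B₂ * c ^ 2 := div_mul_cancel₀ _ (by positivity)
  have hcross : ∀ t, 2 * (x₂ t ⬝ᵥ M₂ *ᵥ (F₂₁ t *ᵥ x₁ t)) ≤ β₂ * V₂ t + D * V₁ t := by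
    intro t
    have hy : (F₂₁ t *ᵥ x₁ t) ⬝ᵥ (F₂₁ t *ᵥ x₁ t) ≤ c ^ 2 * (x₁ t ⬝ᵥ x₁ t) := by
      have h := pow_le_pow_left₀ (Real.sqrt_nonneg _) (h₂₁ t (x₁ t)) 2
      rwa [mul_pow, Real.sq_sqrt (dotProduct_self_nonneg_real _),
        Real.sq_sqrt (dotProduct_self_nonneg_real _)] at h
    have hyoung := quadForm_young hM₂.posSemidef β₂ (x₂ t) (F₂₁ t *ᵥ x₁ t)
    have hchain : (F₂₁ t *ᵥ x₁ t) ⬝ᵥ M₂ *ᵥ (F₂₁ t *ᵥ x₁ t) ≤ β₂ * (D * V₁ t) :=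
      calc _ ≤ B₂ * ((F₂₁ t *ᵥ x₁ t) ⬝ᵥ (F₂₁ t *ᵥ x₁ t)) := hup₂ _
        _ ≤ B₂ * (c ^ 2 * (x₁ t ⬝ᵥ x₁ t)) := mul_le_mul_of_nonneg_left hy hB₂.le
        _ = β₂ * (D * (a₁ * (x₁ t ⬝ᵥ x₁ t))) := by
          linear_combination (-(x₁ t ⬝ᵥ x₁ t)) * hDmul
        _ ≤ β₂ * (D * V₁ t) := by gcongr; exact hlow₁ _
    refine le_of_mul_le_mul_left ?_ hβ₂
    calc β₂ * (2 * (x₂ t ⬝ᵥ M₂ *ᵥ (F₂₁ t *ᵥ x₁ t)))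
        = 2 * β₂ * (x₂ t ⬝ᵥ M₂ *ᵥ (F₂₁ t *ᵥ x₁ t)) := by ring
      _ ≤ β₂ ^ 2 * V₂ t + β₂ * (D * V₁ t) := hyoung.trans (by gcongr)
      _ = β₂ * (β₂ * V₂ t + D * V₁ t) := by ring
  -- The weight is chosen so that `2 K β₁ - D ≥ K β₁`.
  set K : ℝ := D / β₁ + 1 with hK
  have hK0 : 0 < K := by positivity
  have hKβ : K * β₁ = D + β₁ := by rw [hK, add_mul, div_mul_cancel₀ _ hβ₁.ne', one_mul]
  set r : ℝ := min β₁ β₂ with hr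
  have hr0 : 0 < r := lt_min hβ₁ hβ₂
  have hdecay : ∀ t ≥ (0 : ℝ), K * V₁ t + V₂ t ≤ Real.exp (-r * t) * (K * V₁ 0 + V₂ 0) := by
    intro t ht
    refine exp_decay_of_deriv_le (V := fun t => K * V₁ t + V₂ t)
      (fun s => ((hasDerivAt_quadForm hM₁.isHermitian (hx₁ s)).const_mul K).add
        (hasDerivAt_quadForm hM₂.isHermitian (hx₂ s))) (fun s => ?_) ht
    have e₁ : 2 * (x₁ s ⬝ᵥ M₁ *ᵥ (F₁₁ s *ᵥ x₁ s)) ≤ -(2 * β₁) * V₁ s :=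
      contraction_quadForm hM₁.isHermitian (h₁ s) _
    have e₂ : 2 * (x₂ s ⬝ᵥ M₂ *ᵥ (F₂₂ s *ᵥ x₂ s)) ≤ -(2 * β₂) * V₂ s :=
      contraction_quadForm hM₂.isHermitian (h₂ s) _
    have e₃ := hcross s
    have e₄ : K * (2 * (x₁ s ⬝ᵥ M₁ *ᵥ (F₁₁ s *ᵥ x₁ s))) ≤ -2 * (D + β₁) * V₁ s := by
      calc _ ≤ K * (-(2 * β₁) * V₁ s) := mul_le_mul_of_nonneg_left e₁ hK0.le
        _ = -2 * (D + β₁) * V₁ s := by linear_combination (-2 * V₁ s) * hKβ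
    have e₅ : r * (K * V₁ s) ≤ (D + β₁) * V₁ s := by
      calc r * (K * V₁ s) ≤ β₁ * (K * V₁ s) :=
            mul_le_mul_of_nonneg_right (min_le_left _ _) (mul_nonneg hK0.le (hV₁0 s))
        _ = (D + β₁) * V₁ s := by linear_combination (V₁ s) * hKβ
    have e₆ : r * V₂ s ≤ β₂ * V₂ s := mul_le_mul_of_nonneg_right (min_le_right _ _) (hV₂0 s)
    have e₇ : 0 ≤ β₁ * V₁ s := mul_nonneg hβ₁.le (hV₁0 s)
    rw [mulVec_add, dotProduct_add]
    linarith
  -- Both norms are compared with `V = K V₁ + V₂`: `m ‖x‖² ≤ V ≤ (K B₁ + B₂) ‖x‖²`.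
  set m : ℝ := min (K * a₁) a₂ with hm
  have hm0 : 0 < m := lt_min (mul_pos hK0 ha₁) ha₂
  refine ⟨(K * B₁ + B₂) / m, by positivity, r / 2, by positivity, fun t ht => ?_⟩
  have hlow : m * ((x₁ t ⬝ᵥ x₁ t) + (x₂ t ⬝ᵥ x₂ t)) ≤ K * V₁ t + V₂ t := by
    have l₁ : m * (x₁ t ⬝ᵥ x₁ t) ≤ K * a₁ * (x₁ t ⬝ᵥ x₁ t) :=
      mul_le_mul_of_nonneg_right (min_le_left _ _) (dotProduct_self_nonneg_real _)
    have l₂ : m * (x₂ t ⬝ᵥ x₂ t) ≤ a₂ * (x₂ t ⬝ᵥ x₂ t) :=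
      mul_le_mul_of_nonneg_right (min_le_right _ _) (dotProduct_self_nonneg_real _)
    have l₃ : K * (a₁ * (x₁ t ⬝ᵥ x₁ t)) ≤ K * V₁ t :=
      mul_le_mul_of_nonneg_left (hlow₁ _) hK0.le
    have l₄ : a₂ * (x₂ t ⬝ᵥ x₂ t) ≤ V₂ t := hlow₂ _
    linarith
  have hup : K * V₁ 0 + V₂ 0 ≤ (K * B₁ + B₂) * ((x₁ 0 ⬝ᵥ x₁ 0) + (x₂ 0 ⬝ᵥ x₂ 0)) := by
    have u₁ : K * V₁ 0 ≤ K * (B₁ * (x₁ 0 ⬝ᵥ x₁ 0)) :=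
      mul_le_mul_of_nonneg_left (hup₁ _) hK0.le
    have u₂ : V₂ 0 ≤ B₂ * (x₂ 0 ⬝ᵥ x₂ 0) := hup₂ _
    have u₃ : 0 ≤ K * B₁ * (x₂ 0 ⬝ᵥ x₂ 0) :=
      mul_nonneg (mul_pos hK0 hB₁).le (dotProduct_self_nonneg_real _)
    have u₄ : 0 ≤ B₂ * (x₁ 0 ⬝ᵥ x₁ 0) := mul_nonneg hB₂.le (dotProduct_self_nonneg_real _)
    linarith
  refine le_of_mul_le_mul_left ?_ hm0
  calc m * ((x₁ t ⬝ᵥ x₁ t) + (x₂ t ⬝ᵥ x₂ t))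
      ≤ Real.exp (-r * t) * (K * V₁ 0 + V₂ 0) := hlow.trans (hdecay t ht)
    _ ≤ Real.exp (-r * t) * ((K * B₁ + B₂) * ((x₁ 0 ⬝ᵥ x₁ 0) + (x₂ 0 ⬝ᵥ x₂ 0))) :=
        mul_le_mul_of_nonneg_left hup (Real.exp_pos _).le
    _ = m * ((K * B₁ + B₂) / m * Real.exp (-(2 * (r / 2)) * t)
          * ((x₁ 0 ⬝ᵥ x₁ 0) + (x₂ 0 ⬝ᵥ x₂ 0))) := by
        rw [mul_div_cancel₀ r two_ne_zero]
        field_simp
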